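/- Let k ≥ 2 be an integer, and let x be a real (or rational-function) parameter with x ≠ 0 and U_k((1-x)/(2x)) ≠ 0. Let C(x) be the k×k tridiagonal matrix with diagonal entries 1-x, sub- and super-diagonal entries -x, and all other entries 0, and set ψ = (1-x)/(2x). Then C(x) is invertible and (C(x)^{-1})_{ij} = U_{i-1}(ψ)·U_{k-j}(ψ)/(x·U_k(ψ)) if i ≤ j, and U_{j-1}(ψ)·U_{k-i}(ψ)/(x·U_k(ψ)) if i > j. -/

import Mathlib

/-- Evaluation of the Chebyshev polynomial of the second kind `U_n` at a real `x`. -/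
noncomputable def chebU (n : ℤ) (x : ℝ) : ℝ := (Polynomial.Chebyshev.U ℝ n).eval x

/-- The `k×k` tridiagonal matrix `C(x)` with diagonal entries `1-x`, sub- and super-diagonal
entries `-x`, and all other entries `0` (rows and columns indexed by `Fin k`,
corresponding to the 1-based indices `1,…,k`). -/
def Cmat (k : ℕ) (x : ℝ) : Matrix (Fin k) (Fin k) ℝ :=
  Matrix.of fun i j =>
    if (i : ℕ) = (j : ℕ) then 1 - x
    else if (i : ℕ) + 1 = (j : ℕ) ∨ (j : ℕ) + 1 = (i : ℕ) then -x
    else 0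

theorem chebU_rec (n : ℤ) (y : ℝ) : chebU (n + 1) y = 2 * y * chebU n y - chebU (n - 1) y := by
  simp [chebU, Polynomial.Chebyshev.U_add_one]

theorem chebU_wronsk (y : ℝ) (k : ℤ) (a : ℕ) :
    chebU (a + 1) y * chebU (k - 1 - a) y - chebU a y * chebU (k - 2 - a) y = chebU k y := by
  induction a with
  | zero =>
    have h := chebU_rec (k - 1) y
    rw [show k - 1 + 1 = k by ring, show k - 1 - 1 = k - 2 by ring] at h
    have h0 : chebU 0 y = 1 := by simp [chebU]
    have h1 : chebU 1 y = 2 * y := by simp [chebU]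
    simp [h0, h1, h]
  | succ a ih =>
    rw [← ih]
    have h1 := chebU_rec (a + 1) y
    have h2 := chebU_rec (k - 2 - a) y
    rw [show (a : ℤ) + 1 - 1 = a by ring] at h1
    rw [show k - 2 - (a : ℤ) + 1 = k - 1 - a by ring] at h2
    push_cast
    rw [h1, h2, show k - 1 - ((a : ℤ) + 1) = k - 2 - a by ring,
      show k - 2 - ((a : ℤ) + 1) = k - 2 - a - 1 by ring]
    ring

theorem Cmat_row (k : ℕ) (x : ℝ) (f : ℤ → ℝ) (h0 : f (-1) = 0) (hk : f k = 0) (i : Fin k) :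
    ∑ j : Fin k, Cmat k x i j * f ((j : ℕ) : ℤ)
      = (1 - x) * f (i : ℕ) - x * f ((i : ℕ) - 1) - x * f ((i : ℕ) + 1) := by
  obtain ⟨i, hi⟩ := i
  have key : ∀ j : Fin k, Cmat k x ⟨i, hi⟩ j * f ((j : ℕ) : ℤ)
      = (fun j : ℕ => (if i = j then (1 - x) * f i else 0)
        + (if i + 1 = j then -x * f (i + 1) else 0)
        + (if j + 1 = i then -x * f (i - 1) else 0)) j := by
    rintro ⟨j, hj⟩
    simp only [Cmat, Matrix.of_apply]
    by_cases h1 : i = j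
    · subst h1; simp
    · by_cases h2 : i + 1 = j
      · subst h2; simp; omega
      · by_cases h3 : j + 1 = i
        · subst h3; simp
          intro h; omega
        · simp [h1, h2, h3]
  rw [Finset.sum_congr rfl (fun j _ => key j), Fin.sum_univ_eq_sum_range
    (fun j : ℕ => (if i = j then (1 - x) * f i else 0)
        + (if i + 1 = j then -x * f (i + 1) else 0)
        + (if j + 1 = i then -x * f (i - 1) else 0)) k]
  rw [Finset.sum_add_distrib, Finset.sum_add_distrib, Finset.sum_ite_eq, Finset.sum_ite_eq]
  have e2 : (if i + 1 ∈ Finset.range k then -x * f (i + 1) else 0) = -x * f (i + 1) := by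
    split_ifs with h
    · rfl
    · have : i + 1 = k := by simp at h; omega
      have h' : (i : ℤ) + 1 = k := by exact_mod_cast this
      rw [h', hk]; simp
  have e3 : (∑ j ∈ Finset.range k, if j + 1 = i then -x * f (i - 1) else 0)
      = -x * f (i - 1) := by
    cases i with
    | zero => simp [h0]
    | succ i =>
      simp only [add_left_inj]
      rw [Finset.sum_ite_eq', if_pos (by simp; omega)]
  rw [e2, e3, if_pos (by simpa using hi)]
  ring

theorem green (k : ℕ) (y : ℝ) (a b : ℕ) (f : ℤ → ℝ)
    (hf : ∀ n : ℤ, f n = if n ≤ b then chebU n y * chebU (k - 1 - b) y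
      else chebU b y * chebU (k - 1 - n) y) :
    2 * y * f a - f (a - 1) - f (a + 1) = if a = b then chebU k y else 0 := by
  rcases lt_trichotomy a b with h | h | h
  · rw [hf, hf, hf, if_pos (by omega), if_pos (by omega), if_pos (by omega), if_neg (by omega),
      chebU_rec a y]
    ring
  · subst h
    rw [hf, hf, hf, if_pos (by omega), if_pos (by omega), if_neg (by omega), if_pos rfl,
      ← chebU_wronsk y k a, chebU_rec a y, show (k : ℤ) - 1 - (a + 1) = k - 2 - a by ring]
    ring
  · have e : f (a - 1) = chebU b y * chebU (k - 1 - (a - 1)) y := by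
      rw [hf]
      split_ifs with h'
      · have : (a : ℤ) - 1 = b := by omega
        rw [this]
      · rfl
    have h2 := chebU_rec (k - 1 - a) y
    rw [e, hf, hf, if_neg (by omega), if_neg (by omega), if_neg (by omega),
      show (k : ℤ) - 1 - (a - 1) = k - 1 - a + 1 by ring, h2,
      show (k : ℤ) - 1 - (a + 1) = k - 1 - a - 1 by ring]
    ring

/-- For `x ≠ 0` with `U_k((1-x)/(2x)) ≠ 0`, the matrix `C(x)` is invertible, and with
`ψ = (1-x)/(2x)` its inverse has entries (in 1-based indices `i,j ∈ {1,…,k}`)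
`(C(x)⁻¹)_{ij} = U_{i-1}(ψ)·U_{k-j}(ψ)/(x·U_k(ψ))` if `i ≤ j`, and
`U_{j-1}(ψ)·U_{k-i}(ψ)/(x·U_k(ψ))` otherwise. -/
theorem inverse_of_tridiagonal (k : ℕ) (hk : 2 ≤ k) (x : ℝ) (hx : x ≠ 0)
    (hU : chebU (k : ℤ) ((1 - x) / (2 * x)) ≠ 0) :
    IsUnit (Cmat k x) ∧
      ∀ i j : Fin k, (Cmat k x)⁻¹ i j =
        if (i : ℕ) ≤ (j : ℕ) then
          chebU ((i : ℕ) : ℤ) ((1 - x) / (2 * x)) *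
            chebU ((k : ℤ) - 1 - (j : ℕ)) ((1 - x) / (2 * x)) /
            (x * chebU (k : ℤ) ((1 - x) / (2 * x)))
        else
          chebU ((j : ℕ) : ℤ) ((1 - x) / (2 * x)) *
            chebU ((k : ℤ) - 1 - (i : ℕ)) ((1 - x) / (2 * x)) /
            (x * chebU (k : ℤ) ((1 - x) / (2 * x))) := by
  set y := (1 - x) / (2 * x) with hy
  have hxy : 1 - x = x * (2 * y) := by rw [hy]; field_simp
  have hm1 : chebU (-1) y = 0 := by simp [chebU]
  let G : Matrix (Fin k) (Fin k) ℝ := Matrix.of fun i j =>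
    if (i : ℕ) ≤ (j : ℕ) then
      chebU ((i : ℕ) : ℤ) y * chebU ((k : ℤ) - 1 - (j : ℕ)) y / (x * chebU (k : ℤ) y)
    else
      chebU ((j : ℕ) : ℤ) y * chebU ((k : ℤ) - 1 - (i : ℕ)) y / (x * chebU (k : ℤ) y)
  have hCG : Cmat k x * G = 1 := by
    ext i b
    let f : ℤ → ℝ := fun n => if n ≤ (b : ℕ) then chebU n y * chebU (k - 1 - (b : ℕ)) y
      else chebU (b : ℕ) y * chebU (k - 1 - n) y
    have hG : ∀ j, G j b = f (j : ℕ) / (x * chebU (k : ℤ) y) := by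
      intro j
      simp only [G, f, Matrix.of_apply, Nat.cast_le]
      split_ifs <;> rfl
    have hr := Cmat_row k x f
      (by simp only [f]; rw [if_pos (by omega), hm1, zero_mul])
      (by
        have := b.2
        simp only [f]
        rw [if_neg (by omega), show (k : ℤ) - 1 - k = -1 by ring, hm1, mul_zero]) i
    have hg := green k y i b f (fun n => rfl)
    rw [Matrix.mul_apply]
    simp only [hG, ← mul_div_assoc]
    rw [← Finset.sum_div, hr, hxy, show x * (2 * y) * f (i : ℕ) - x * f ((i : ℕ) - 1)
      - x * f ((i : ℕ) + 1) = x * (2 * y * f (i : ℕ) - f ((i : ℕ) - 1) - f ((i : ℕ) + 1)) by ring,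
      hg, Matrix.one_apply]
    by_cases h : i = b
    · rw [if_pos (by rw [h]), if_pos h, div_self (mul_ne_zero hx hU)]
    · rw [if_neg (fun h' => h (Fin.ext h')), if_neg h]; simp
  refine ⟨IsUnit.of_mul_eq_one _ hCG, fun i j => ?_⟩
  rw [Matrix.inv_eq_right_inv hCG]
  rfl
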